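/- Let f be a holomorphic germ at 0 in C^n, n ≥ 2, and suppose g(z_1,...,z_k) := f(z_1,...,z_k,0,...,0) is a nonzero germ in k < n variables. Then the Newton boundary of g equals the set of compact faces of Γ(f) contained in the coordinate subspace {x_{k+1} = ... = x_n = 0}: Γ(g) = {S ∈ Γ(f) : S ⊂ {x_{k+1}=...=x_n=0}}. -/

import Mathlib

/-!
Write `L` for the coordinate subspace `x_{k+1} = … = x_n = 0`.  The Taylor coefficients of the
restriction `g` are those of `f` with exponents in `L` (`mem_nsupp_padZ`), and since Newton diagrams
lie in the positive orthant it follows that `Γ₊(g) = Γ₊(f) ∩ L` (`padZ_mem_ndiag_iff`).  Hence two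
faces cut out by a positive form `u` and by its restriction to `L` agree as soon as both forms have
the same minimum and the face of `f` lies in `L` (`image_face_eq`).

* Given a face of `f` inside `L` with form `u`, the minimum of `u` on `Γ₊(f)` is attained
  (`face_nonempty`), so on `Γ₊(f) ∩ L`, and it is also the minimum on `Γ₊(g)`.
* Given a face of `g` with form `u'` and minimum `l ≥ 0`, extend `u'` by the weight `l + 1` in the
  remaining directions.  An exponent of `f` outside `L` then has weight greater than `l`, which
  forces the face of `f` into `L` (`exists_extension`).

Both directions need the support of `g` to be nonempty (`nsupp_nonempty`): for a holomorphic germ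
whose iterated partial derivatives `mder ν` all vanish at `0`, symmetry of second derivatives shows
that the partial derivatives of the germ have the same property, so all iterated Fréchet derivatives
vanish and the Taylor series is zero.
-/

open Finset Filter Topology

/-- The `i`-th partial derivative of `f`. -/
noncomputable def pder {n : ℕ} (i : Fin n) (f : (Fin n → ℂ) → ℂ) : (Fin n → ℂ) → ℂ :=
  fun z => fderiv ℂ f z (Pi.single i 1)

/-- The iterated partial derivative `∂^ν f` for a multi-index `ν`. -/
noncomputable def mder {n : ℕ} (ν : Fin n → ℕ) (f : (Fin n → ℂ) → ℂ) : (Fin n → ℂ) → ℂ :=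
  ((List.finRange n).map fun i => (pder i)^[ν i]).foldr (fun g acc => g acc) f

/-- The support of the Taylor expansion of `f` at `0`. -/
def NSupp {n : ℕ} (f : (Fin n → ℂ) → ℂ) : Set (Fin n → ℕ) :=
  {ν | mder ν f 0 ≠ 0}

/-- The Taylor coefficient `a_ν` of `f` at `0`. -/
noncomputable def coeffOf {n : ℕ} (f : (Fin n → ℂ) → ℂ) (ν : Fin n → ℕ) : ℂ :=
  mder ν f 0 / ((∏ i, (ν i).factorial : ℕ) : ℂ)

/-- The Newton diagram `Γ₊(f)`: the convex hull of `⋃_{ν ∈ supp f} (ν + ℝ₊ⁿ)`. -/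
def NDiag {n : ℕ} (f : (Fin n → ℂ) → ℂ) : Set (Fin n → ℝ) :=
  convexHull ℝ {x | ∃ ν ∈ NSupp f, ∀ i, (ν i : ℝ) ≤ x i}

/-- `l(u, A) = inf {⟨u, v⟩ : v ∈ A}`. -/
noncomputable def ell {n : ℕ} (u : Fin n → ℝ) (A : Set (Fin n → ℝ)) : ℝ :=
  sInf ((fun v => ∑ i, u i * v i) '' A)

/-- The face `Δ(u, A) = {v ∈ A : ⟨u, v⟩ = l(u, A)}`. -/
def faceOf {n : ℕ} (u : Fin n → ℝ) (A : Set (Fin n → ℝ)) : Set (Fin n → ℝ) :=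
  {v | v ∈ A ∧ ∑ i, u i * v i = ell u A}

/-- `S` is a compact face of the Newton diagram of `f` (member of the Newton boundary). -/
def IsCompactFace {n : ℕ} (f : (Fin n → ℂ) → ℂ) (S : Set (Fin n → ℝ)) : Prop :=
  ∃ u : Fin n → ℝ, (∀ i, 0 < u i) ∧ S = faceOf u (NDiag f)

/-- The dimension of a face, as the rank of the direction of its affine span. -/
noncomputable def faceDim {n : ℕ} (S : Set (Fin n → ℝ)) : ℕ :=
  Module.finrank ℝ (affineSpan ℝ S).direction

/-- `Γ^k(f)`: the `k`-dimensional compact faces of the Newton boundary of `f`. -/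
def GammaK {n : ℕ} (f : (Fin n → ℂ) → ℂ) (k : ℕ) : Set (Set (Fin n → ℝ)) :=
  {S | IsCompactFace f S ∧ faceDim S = k}

/-- The quasihomogeneous polynomial `f_S = Σ_{ν ∈ S} a_ν z^ν`. -/
noncomputable def facePoly {n : ℕ} (f : (Fin n → ℂ) → ℂ) (S : Set (Fin n → ℝ)) :
    (Fin n → ℂ) → ℂ :=
  fun z => ∑' ν : {ν : Fin n → ℕ // (fun i => (ν i : ℝ)) ∈ S}, coeffOf f ν.1 * ∏ i, z i ^ ν.1 i

/-- `f` is nondegenerate in the Kouchnirenko sense. -/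
def Nondeg {n : ℕ} (f : (Fin n → ℂ) → ℂ) : Prop :=
  ∀ S, IsCompactFace f S →
    ¬∃ z : Fin n → ℂ, (∀ i, z i ≠ 0) ∧ ∀ i, pder i (facePoly f S) z = 0

/-- `f` is a singularity: a nonzero holomorphic germ with `f 0 = 0`, `∇f 0 = 0`. -/
def IsSing {n : ℕ} (f : (Fin n → ℂ) → ℂ) : Prop :=
  AnalyticAt ℂ f 0 ∧ (¬∀ᶠ z in 𝓝 0, f z = 0) ∧ f 0 = 0 ∧ ∀ i, pder i f 0 = 0

/-- `f` is an isolated singularity: `∇f` has an isolated zero at `0`. -/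
def IsIsolSing {n : ℕ} (f : (Fin n → ℂ) → ℂ) : Prop :=
  IsSing f ∧ ∃ r > (0 : ℝ), ∀ z : Fin n → ℂ, ‖z‖ < r → z ≠ 0 → ∃ i, pder i f z ≠ 0

/-! ### Germs and iterated partial derivatives -/

/-- The iterated derivative `∂^ν f` with the partial derivatives taken in the order prescribed by
the list `l`, its head being applied last; `mder` is the case `l = List.finRange n`. -/
noncomputable def mderList {n : ℕ} (l : List (Fin n)) (ν : Fin n → ℕ) (f : (Fin n → ℂ) → ℂ) :
    (Fin n → ℂ) → ℂ :=
  (l.map fun i => (pder i)^[ν i]).foldr (fun g acc => g acc) f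

lemma mderList_nil {n : ℕ} (ν : Fin n → ℕ) (f : (Fin n → ℂ) → ℂ) : mderList [] ν f = f := rfl

lemma mderList_cons {n : ℕ} (i : Fin n) (l : List (Fin n)) (ν : Fin n → ℕ)
    (f : (Fin n → ℂ) → ℂ) : mderList (i :: l) ν f = (pder i)^[ν i] (mderList l ν f) := rfl

lemma mderList_append {n : ℕ} (l₁ l₂ : List (Fin n)) (ν : Fin n → ℕ)
    (f : (Fin n → ℂ) → ℂ) : mderList (l₁ ++ l₂) ν f = mderList l₁ ν (mderList l₂ ν f) := by
  simp [mderList]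

lemma mderList_eq_self {n : ℕ} {l : List (Fin n)} {ν : Fin n → ℕ} (f : (Fin n → ℂ) → ℂ)
    (h : ∀ i ∈ l, ν i = 0) : mderList l ν f = f := by
  induction l with
  | nil => rfl
  | cons i l ih =>
    rw [mderList_cons, h i (by simp), ih fun j hj => h j (by simp [hj])]
    rfl

lemma mderList_congr_index {n : ℕ} {l : List (Fin n)} {ν μ : Fin n → ℕ} (f : (Fin n → ℂ) → ℂ)
    (h : ∀ i ∈ l, ν i = μ i) : mderList l ν f = mderList l μ f := by
  induction l with
  | nil => rfl
  | cons i l ih =>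
    rw [mderList_cons, mderList_cons, h i (by simp), ih fun j hj => h j (by simp [hj])]

lemma analyticAt_pder {n : ℕ} {f : (Fin n → ℂ) → ℂ} {x : Fin n → ℂ} (hf : AnalyticAt ℂ f x)
    (i : Fin n) : AnalyticAt ℂ (pder i f) x :=
  ((ContinuousLinearMap.apply ℂ ℂ (Pi.single i 1 : Fin n → ℂ)).analyticAt _).comp hf.fderiv

lemma analyticAt_iterate_pder {n : ℕ} {f : (Fin n → ℂ) → ℂ} {x : Fin n → ℂ}
    (hf : AnalyticAt ℂ f x) (i : Fin n) (m : ℕ) : AnalyticAt ℂ ((pder i)^[m] f) x := by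
  induction m with
  | zero => exact hf
  | succ m ih => rw [Function.iterate_succ_apply']; exact analyticAt_pder ih i

lemma analyticAt_mderList {n : ℕ} {f : (Fin n → ℂ) → ℂ} {x : Fin n → ℂ} (hf : AnalyticAt ℂ f x)
    (l : List (Fin n)) (ν : Fin n → ℕ) : AnalyticAt ℂ (mderList l ν f) x := by
  induction l with
  | nil => exact hf
  | cons i l ih => rw [mderList_cons]; exact analyticAt_iterate_pder ih i _

lemma pder_congr {n : ℕ} {f g : (Fin n → ℂ) → ℂ} {x : Fin n → ℂ} (h : f =ᶠ[𝓝 x] g) (i : Fin n) :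
    pder i f =ᶠ[𝓝 x] pder i g := by
  filter_upwards [h.fderiv (𝕜 := ℂ)] with z hz
  simp [pder, hz]

lemma iterate_pder_congr {n : ℕ} {f g : (Fin n → ℂ) → ℂ} {x : Fin n → ℂ} (h : f =ᶠ[𝓝 x] g)
    (i : Fin n) (m : ℕ) : (pder i)^[m] f =ᶠ[𝓝 x] (pder i)^[m] g := by
  induction m with
  | zero => exact h
  | succ m ih => simp only [Function.iterate_succ_apply']; exact pder_congr ih i

lemma pder_comm {n : ℕ} {f : (Fin n → ℂ) → ℂ} {x : Fin n → ℂ} (hf : AnalyticAt ℂ f x)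
    (i j : Fin n) : pder i (pder j f) =ᶠ[𝓝 x] pder j (pder i f) := by
  have key : ∀ (a b : Fin n) (z : Fin n → ℂ), AnalyticAt ℂ f z →
      pder a (pder b f) z = fderiv ℂ (fderiv ℂ f) z (Pi.single a 1) (Pi.single b 1) := by
    intro a b z hz
    have h1 := (ContinuousLinearMap.apply ℂ ℂ (Pi.single b 1 : Fin n → ℂ)).hasFDerivAt.comp z
      hz.fderiv.differentiableAt.hasFDerivAt
    change fderiv ℂ (⇑(ContinuousLinearMap.apply ℂ ℂ (Pi.single b 1 : Fin n → ℂ)) ∘ fderiv ℂ f) z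
      (Pi.single a 1) = _
    rw [h1.fderiv]
    rfl
  filter_upwards [hf.eventually_analyticAt] with z hz
  rw [key i j z hz, key j i z hz]
  exact (hz.contDiffAt (n := ⊤)).isSymmSndFDerivAt_of_omega _ _

lemma iterate_pder_comm {n : ℕ} {f : (Fin n → ℂ) → ℂ} {x : Fin n → ℂ} (hf : AnalyticAt ℂ f x)
    (i j : Fin n) (m : ℕ) : (pder i)^[m] (pder j f) =ᶠ[𝓝 x] pder j ((pder i)^[m] f) := by
  induction m with
  | zero => rfl
  | succ m ih =>
    simp only [Function.iterate_succ_apply']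
    exact (pder_congr ih i).trans (pder_comm (analyticAt_iterate_pder hf i m) i j)

lemma mderList_pder {n : ℕ} {f : (Fin n → ℂ) → ℂ} {x : Fin n → ℂ} (hf : AnalyticAt ℂ f x)
    (l : List (Fin n)) (ν : Fin n → ℕ) (j : Fin n) :
    mderList l ν (pder j f) =ᶠ[𝓝 x] pder j (mderList l ν f) := by
  induction l with
  | nil => rfl
  | cons i l ih =>
    simp only [mderList_cons]
    exact (iterate_pder_congr ih i _).trans
      (iterate_pder_comm (analyticAt_mderList hf l ν) i j _)

/-- Differentiating once more in direction `j` raises the exponent of `j` in the multi-index. -/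
lemma mderList_pder_eq {n : ℕ} {f : (Fin n → ℂ) → ℂ} {x : Fin n → ℂ} (hf : AnalyticAt ℂ f x)
    {l : List (Fin n)} (hl : l.Nodup) (ν : Fin n → ℕ) {j : Fin n} (hj : j ∈ l) :
    mderList l ν (pder j f) =ᶠ[𝓝 x] mderList l (Function.update ν j (ν j + 1)) f := by
  induction l with
  | nil => simp at hj
  | cons i l ih =>
    rw [List.nodup_cons] at hl
    simp only [mderList_cons]
    by_cases hij : i = j
    · subst hij
      rw [Function.update_self, Function.iterate_succ_apply]
      refine iterate_pder_congr ((mderList_pder hf l ν i).trans ?_) i _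
      rw [mderList_congr_index f (l := l) (ν := ν) (μ := Function.update ν i (ν i + 1))]
      intro a ha
      rw [Function.update_of_ne]
      rintro rfl
      exact hl.1 ha
    · rw [Function.update_of_ne hij]
      exact iterate_pder_congr (ih hl.2 (by simpa [Ne.symm hij] using hj)) i _

/-- The class of holomorphic germs with empty Newton support is stable under partial derivatives, so by
induction on the order every iterated Fréchet derivative of such a germ vanishes at `0`. -/
lemma iteratedFDeriv_eq_zero {n : ℕ} (m : ℕ) {f : (Fin n → ℂ) → ℂ} (hf : AnalyticAt ℂ f 0)
    (h : ∀ ν, mder ν f 0 = 0) : iteratedFDeriv ℂ m f 0 = 0 := by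
  induction m generalizing f with
  | zero =>
    ext v
    rw [iteratedFDeriv_zero_apply]
    have h0 := h 0
    rwa [show mder 0 f = f from mderList_eq_self f (l := List.finRange n) (by simp)] at h0
  | succ m ih =>
    have hd : (fun y => fderiv ℂ f y) =
        fun y => ∑ i, pder i f y • (ContinuousLinearMap.proj i : (Fin n → ℂ) →L[ℂ] ℂ) := by
      ext y v
      conv_lhs => rw [pi_eq_sum_univ' v, map_sum]
      simp [pder, mul_comm]
    have hz : ∀ i, iteratedFDeriv ℂ m (pder i f) 0 = 0 := fun i =>
      ih (analyticAt_pder hf i) fun ν =>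
        ((mderList_pder_eq hf (List.nodup_finRange n) ν (List.mem_finRange i)).eq_of_nhds).trans
          (h _)
    ext v
    rw [iteratedFDeriv_succ_apply_right, hd, iteratedFDeriv_fun_sum_apply]
    · simp only [_root_.sum_apply]
      refine Finset.sum_eq_zero fun i _ => ?_
      rw [iteratedFDeriv_smul_const_apply (analyticAt_pder hf i).contDiffAt, hz i]
      simp
    · intro i _
      exact (analyticAt_pder hf i).contDiffAt.smul contDiffAt_const

/-- A nonzero holomorphic germ has a nonzero Taylor coefficient. -/
lemma nsupp_nonempty {n : ℕ} {f : (Fin n → ℂ) → ℂ} (hf : AnalyticAt ℂ f 0)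
    (h : ¬∀ᶠ z in 𝓝 0, f z = 0) : (NSupp f).Nonempty := by
  by_contra hne
  refine h ?_
  have h0 : ∀ ν, mder ν f 0 = 0 := by
    intro ν
    by_contra hν
    exact hne ⟨ν, hν⟩
  obtain ⟨p, r, hp⟩ := hf
  filter_upwards [Metric.eball_mem_nhds (0 : Fin n → ℂ) hp.r_pos] with y hy
  have hs := hp.hasSum_iteratedFDeriv hy
  simp only [iteratedFDeriv_eq_zero _ ⟨p, r, hp⟩ h0, _root_.zero_apply,
    smul_zero, zero_add] at hs
  exact hs.unique hasSum_zero

/-! ### Restriction to a coordinate subspace -/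

/-- The embedding of `R^k` into `R^n` (for `k ≤ n`) by extension with zeros. -/
def padZ {k n : ℕ} {R : Type*} [Zero R] (y : Fin k → R) : Fin n → R :=
  fun i => if h : (i : ℕ) < k then y ⟨i, h⟩ else 0

lemma padZ_castLE {k n : ℕ} {R : Type*} [Zero R] (h : k ≤ n) (y : Fin k → R) (i : Fin k) :
    (padZ y : Fin n → R) (Fin.castLE h i) = y i := by
  simp [padZ]

lemma padZ_of_le {k n : ℕ} {R : Type*} [Zero R] (y : Fin k → R) {i : Fin n} (h : k ≤ (i : ℕ)) :
    padZ y i = 0 := by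
  simp [padZ, h]

lemma padZ_restrict {k n : ℕ} {R : Type*} [Zero R] (h : k ≤ n) {x : Fin n → R}
    (hx : ∀ i : Fin n, k ≤ (i : ℕ) → x i = 0) : padZ (fun i : Fin k => x (Fin.castLE h i)) = x := by
  ext i
  by_cases hi : (i : ℕ) < k
  · simp [padZ, hi]
  · simp [padZ, hi, hx i (not_lt.1 hi)]

/-- `padZ` as a linear map. -/
def padLin (k n : ℕ) (R : Type*) [Semiring R] : (Fin k → R) →ₗ[R] (Fin n → R) where
  toFun := padZ
  map_add' x y := by
    ext i
    by_cases hi : (i : ℕ) < k <;> simp [padZ, hi]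
  map_smul' c x := by
    ext i
    by_cases hi : (i : ℕ) < k <;> simp [padZ, hi]

lemma padLin_apply {k n : ℕ} {R : Type*} [Semiring R] (y : Fin k → R) :
    padLin k n R y = padZ y := rfl

lemma padZ_single {k n : ℕ} {R : Type*} [Semiring R] (h : k ≤ n) (i : Fin k) :
    (padZ (Pi.single i (1 : R)) : Fin n → R) = Pi.single (Fin.castLE h i) 1 := by
  ext j
  by_cases hj : (j : ℕ) < k
  · simp [padZ, hj, Pi.single_apply, Fin.ext_iff]
  · have : j ≠ Fin.castLE h i := by
      rintro rfl
      exact hj (by simp)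
    simp [padZ, hj, this]

lemma sum_mul_padZ {k n : ℕ} (h : k ≤ n) (u : Fin n → ℝ) (y : Fin k → ℝ) :
    ∑ i, u i * padZ y i = ∑ i, u (Fin.castLE h i) * y i := by
  obtain ⟨m, rfl⟩ := Nat.exists_eq_add_of_le h
  rw [Fin.sum_univ_add]
  simp [padZ]
  rfl

lemma continuous_padZ {k n : ℕ} : Continuous (padZ : (Fin k → ℂ) → Fin n → ℂ) :=
  (padLin k n ℂ).continuous_of_finiteDimensional

lemma padZ_zero {k n : ℕ} {R : Type*} [Zero R] : (padZ (0 : Fin k → R) : Fin n → R) = 0 := by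
  ext i
  simp [padZ]

lemma analyticAt_comp_padZ {k n : ℕ} {f : (Fin n → ℂ) → ℂ} (hf : AnalyticAt ℂ f 0) :
    AnalyticAt ℂ (fun z : Fin k → ℂ => f (padZ z)) 0 := by
  have h1 : AnalyticAt ℂ (padZ : (Fin k → ℂ) → Fin n → ℂ) 0 :=
    (padLin k n ℂ).toContinuousLinearMap.analyticAt 0
  refine AnalyticAt.fun_comp (g := f) ?_ h1
  rwa [padZ_zero]

lemma pder_comp_padZ {k n : ℕ} (h : k ≤ n) {f : (Fin n → ℂ) → ℂ} (hf : AnalyticAt ℂ f 0)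
    {g : (Fin k → ℂ) → ℂ} (hg : g =ᶠ[𝓝 0] fun z => f (padZ z)) (i : Fin k) :
    pder i g =ᶠ[𝓝 0] fun z => pder (Fin.castLE h i) f (padZ z) := by
  refine (pder_congr hg i).trans ?_
  have hev : ∀ᶠ z : Fin k → ℂ in 𝓝 0, AnalyticAt ℂ f (padZ z) := by
    have ht : Tendsto (padZ : (Fin k → ℂ) → Fin n → ℂ) (𝓝 0) (𝓝 0) := by
      simpa only [padZ_zero] using (continuous_padZ (k := k) (n := n)).tendsto 0
    exact ht.eventually hf.eventually_analyticAt
  filter_upwards [hev] with z hz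
  have h1 : HasFDerivAt (padZ : (Fin k → ℂ) → Fin n → ℂ)
      (padLin k n ℂ).toContinuousLinearMap z := (padLin k n ℂ).toContinuousLinearMap.hasFDerivAt
  have h2 := hz.differentiableAt.hasFDerivAt.comp z h1
  change fderiv ℂ (f ∘ padZ) z (Pi.single i 1) = fderiv ℂ f (padZ z) (Pi.single (Fin.castLE h i) 1)
  rw [h2.fderiv, ← padZ_single h i]
  rfl

lemma iterate_pder_comp_padZ {k n : ℕ} (h : k ≤ n) {f : (Fin n → ℂ) → ℂ} (hf : AnalyticAt ℂ f 0)
    {g : (Fin k → ℂ) → ℂ} (hg : g =ᶠ[𝓝 0] fun z => f (padZ z)) (i : Fin k) (m : ℕ) :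
    (pder i)^[m] g =ᶠ[𝓝 0] fun z => (pder (Fin.castLE h i))^[m] f (padZ z) := by
  induction m with
  | zero => exact hg
  | succ m ih =>
    simp only [Function.iterate_succ_apply']
    exact pder_comp_padZ h (analyticAt_iterate_pder hf _ m) ih i

lemma mderList_comp_padZ {k n : ℕ} (h : k ≤ n) {f : (Fin n → ℂ) → ℂ} (hf : AnalyticAt ℂ f 0)
    (l : List (Fin k)) (ν : Fin k → ℕ) :
    mderList l ν (fun z => f (padZ z)) =ᶠ[𝓝 0]
      fun z => mderList (l.map (Fin.castLE h)) (padZ ν) f (padZ z) := by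
  induction l with
  | nil => rfl
  | cons i l ih =>
    simp only [List.map_cons, mderList_cons, padZ_castLE]
    exact iterate_pder_comp_padZ h (analyticAt_mderList hf _ _) ih i _

lemma mder_padZ {k n : ℕ} (h : k ≤ n) {f : (Fin n → ℂ) → ℂ} (hf : AnalyticAt ℂ f 0)
    (ν : Fin k → ℕ) : mder ν (fun z => f (padZ z)) 0 = mder (padZ ν) f 0 := by
  have h1 := (mderList_comp_padZ h hf (List.finRange k) ν).eq_of_nhds
  rw [padZ_zero] at h1
  refine h1.trans ?_
  obtain ⟨m, rfl⟩ := Nat.exists_eq_add_of_le h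
  change _ = mderList (List.finRange (k + m)) (padZ ν) f 0
  have hl : List.finRange (k + m) = (List.finRange k).map (Fin.castLE h) ++
      (List.finRange m).map (Fin.natAdd k) := by
    simp only [List.finRange, List.ofFn_add, List.map_ofFn]
    rfl
  -- the partial derivatives in the last `m` directions are taken zero times
  rw [hl, mderList_append, mderList_eq_self (l := (List.finRange m).map (Fin.natAdd k))]
  simp [padZ]

lemma mem_nsupp_padZ {k n : ℕ} (h : k ≤ n) {f : (Fin n → ℂ) → ℂ} (hf : AnalyticAt ℂ f 0)
    (ν : Fin k → ℕ) : ν ∈ NSupp (fun z : Fin k → ℂ => f (padZ z)) ↔ padZ ν ∈ NSupp f := by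
  simp only [NSupp, Set.mem_ofPred_eq, mder_padZ h hf]

/-! ### Newton diagrams and their faces -/

lemma mem_ndiag_of_nsupp {n : ℕ} {f : (Fin n → ℂ) → ℂ} {ν : Fin n → ℕ} (h : ν ∈ NSupp f) :
    (fun i => (ν i : ℝ)) ∈ NDiag f :=
  subset_convexHull ℝ _ ⟨ν, h, fun _ => le_rfl⟩

lemma ndiag_subset {n : ℕ} {f : (Fin n → ℂ) → ℂ} {C : Set (Fin n → ℝ)} (hC : Convex ℝ C)
    (h : ∀ ν ∈ NSupp f, ∀ x : Fin n → ℝ, (∀ i, (ν i : ℝ) ≤ x i) → x ∈ C) : NDiag f ⊆ C :=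
  convexHull_min (fun x ⟨ν, hν, hx⟩ => h ν hν x hx) hC

lemma ndiag_nonneg {n : ℕ} {f : (Fin n → ℂ) → ℂ} {x : Fin n → ℝ} (hx : x ∈ NDiag f) (i : Fin n) :
    0 ≤ x i := by
  have hs : NDiag f ⊆ Set.Ici 0 := ndiag_subset (convex_Ici 0)
    fun ν _ x hx i => (Nat.cast_nonneg _).trans (hx i)
  exact hs hx i

lemma bddBelow_ndiag {n : ℕ} (f : (Fin n → ℂ) → ℂ) {u : Fin n → ℝ} (hu : ∀ i, 0 < u i) :
    BddBelow ((fun v => ∑ i, u i * v i) '' NDiag f) := by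
  refine ⟨0, ?_⟩
  rintro _ ⟨x, hx, rfl⟩
  exact Finset.sum_nonneg fun i _ => mul_nonneg (hu i).le (ndiag_nonneg hx i)

lemma ell_le {n : ℕ} {f : (Fin n → ℂ) → ℂ} {u : Fin n → ℝ} (hu : ∀ i, 0 < u i)
    {x : Fin n → ℝ} (hx : x ∈ NDiag f) : ell u (NDiag f) ≤ ∑ i, u i * x i :=
  csInf_le (bddBelow_ndiag f hu) ⟨x, hx, rfl⟩

lemma le_ell {n : ℕ} {f : (Fin n → ℂ) → ℂ} {u : Fin n → ℝ} {c : ℝ} (hne : (NDiag f).Nonempty)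
    (h : ∀ x ∈ NDiag f, c ≤ ∑ i, u i * x i) : c ≤ ell u (NDiag f) := by
  refine le_csInf (hne.image _) ?_
  rintro _ ⟨x, hx, rfl⟩
  exact h x hx

lemma convex_le_dot {n : ℕ} (u : Fin n → ℝ) (c : ℝ) :
    Convex ℝ {x : Fin n → ℝ | c ≤ ∑ i, u i * x i} := by
  refine convex_halfSpace_ge (f := fun x : Fin n → ℝ => ∑ i, u i * x i) ⟨fun x y => ?_,
    fun a x => ?_⟩ c
  · simp [mul_add, Finset.sum_add_distrib]
  · simp [Finset.mul_sum, mul_left_comm]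

/-- A linear form with positive coefficients attains its infimum on the Newton diagram: only
finitely many exponents of the support lie below a given level. -/
lemma face_nonempty {n : ℕ} {f : (Fin n → ℂ) → ℂ} {u : Fin n → ℝ} (hu : ∀ i, 0 < u i)
    (hne : (NSupp f).Nonempty) : (faceOf u (NDiag f)).Nonempty := by
  obtain ⟨μ, hμ⟩ := hne
  set w : (Fin n → ℕ) → ℝ := fun ν => ∑ i, u i * (ν i : ℝ) with hw
  have hfin : {ν ∈ NSupp f | w ν ≤ w μ}.Finite := by
    refine (Set.finite_Iic (fun i => ⌈w μ / u i⌉₊)).subset ?_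
    rintro ν ⟨-, hν⟩ i
    have h1 : u i * (ν i : ℝ) ≤ w ν :=
      Finset.single_le_sum (f := fun i => u i * (ν i : ℝ))
        (fun j _ => mul_nonneg (hu j).le (Nat.cast_nonneg _)) (Finset.mem_univ i)
    have h2 : (ν i : ℝ) ≤ w μ / u i := by
      rw [le_div_iff₀ (hu i)]
      linarith
    exact_mod_cast h2.trans (Nat.le_ceil _)
  obtain ⟨ν, ⟨hν, hνμ⟩, hmin⟩ := Set.exists_min_image _ w hfin ⟨μ, hμ, le_rfl⟩
  have hall : ∀ ξ ∈ NSupp f, w ν ≤ w ξ := by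
    intro ξ hξ
    rcases le_total (w ξ) (w μ) with h | h
    · exact hmin ξ ⟨hξ, h⟩
    · exact hνμ.trans h
  have hmem := mem_ndiag_of_nsupp hν
  refine ⟨_, hmem, le_antisymm (le_ell ⟨_, hmem⟩ ?_) (ell_le hu hmem)⟩
  refine fun x hx => ndiag_subset (convex_le_dot u (w ν)) ?_ hx
  intro ξ hξ y hy
  exact (hall ξ hξ).trans
    (Finset.sum_le_sum fun i _ => mul_le_mul_of_nonneg_left (hy i) (hu i).le)

/-- The Newton diagram of the restriction is the section of the Newton diagram by the coordinate
subspace. A convex combination of points with nonnegative coordinates lies in the subspace only if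
each point with positive weight does, which makes the set `C` below convex. -/
lemma padZ_mem_ndiag_iff {k n : ℕ} (h : k ≤ n) {f : (Fin n → ℂ) → ℂ} (hf : AnalyticAt ℂ f 0)
    (y : Fin k → ℝ) :
    padZ y ∈ NDiag f ↔ y ∈ NDiag (fun z : Fin k → ℂ => f (padZ z)) := by
  constructor
  · set g : (Fin k → ℂ) → ℂ := fun z => f (padZ z) with hg
    let C : Set (Fin n → ℝ) := {x | (∀ i, 0 ≤ x i) ∧ ((∀ i : Fin n, k ≤ (i : ℕ) → x i = 0) →
      (fun i : Fin k => x (Fin.castLE h i)) ∈ NDiag g)}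
    have hC : Convex ℝ C := by
      refine convex_iff_forall_pos.2 ?_
      rintro x ⟨hx0, hx⟩ z ⟨hz0, hz⟩ a b ha hb hab
      refine ⟨fun i => add_nonneg (mul_nonneg ha.le (hx0 i)) (mul_nonneg hb.le (hz0 i)),
        fun hL => ?_⟩
      have key : ∀ i : Fin n, k ≤ (i : ℕ) → x i = 0 ∧ z i = 0 := by
        intro i hi
        have h0 : a * x i + b * z i = 0 := hL i hi
        have h1 := mul_nonneg ha.le (hx0 i)
        have h2 := mul_nonneg hb.le (hz0 i)
        constructor
        · exact (mul_eq_zero.1 (by linarith : a * x i = 0)).resolve_left ha.ne'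
        · exact (mul_eq_zero.1 (by linarith : b * z i = 0)).resolve_left hb.ne'
      exact (convex_convexHull ℝ _ : Convex ℝ (NDiag g)) (hx fun i hi => (key i hi).1)
        (hz fun i hi => (key i hi).2) ha.le hb.le hab
    intro hy
    have hyC : padZ y ∈ C := by
      refine ndiag_subset hC ?_ hy
      intro ν hν x hx
      refine ⟨fun i => (Nat.cast_nonneg _).trans (hx i), fun hL => ?_⟩
      refine subset_convexHull ℝ _ ⟨fun i => ν (Fin.castLE h i), ?_, fun i => hx _⟩
      rw [hg, mem_nsupp_padZ h hf, padZ_restrict h]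
      · exact hν
      · intro i hi
        have := hx i
        rw [hL i hi] at this
        exact_mod_cast le_antisymm this (Nat.cast_nonneg _)
    have := hyC.2 fun i hi => padZ_of_le y hi
    simpa only [padZ_castLE] using this
  · have hs : NDiag (fun z : Fin k → ℂ => f (padZ z)) ⊆ (padLin k n ℝ) ⁻¹' NDiag f := by
      refine ndiag_subset ((convex_convexHull ℝ _).linear_preimage _) ?_
      intro ν hν x hx
      refine subset_convexHull ℝ _ ⟨padZ ν, (mem_nsupp_padZ h hf ν).1 hν, fun i => ?_⟩
      by_cases hi : (i : ℕ) < k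
      · simpa [padLin_apply, padZ, hi] using hx ⟨i, hi⟩
      · simp [padLin_apply, padZ, hi]
    exact fun hy => hs hy

/-- Once the linear form `u` and its restriction have the same minimum and the face of `f` lies in
the coordinate subspace, the two faces agree. -/
lemma image_face_eq {k n : ℕ} (h : k ≤ n) {f : (Fin n → ℂ) → ℂ} (hf : AnalyticAt ℂ f 0)
    (u : Fin n → ℝ)
    (hell : ell u (NDiag f) =
      ell (fun i : Fin k => u (Fin.castLE h i)) (NDiag fun z : Fin k → ℂ => f (padZ z)))
    (hsub : faceOf u (NDiag f) ⊆ {x | ∀ i : Fin n, k ≤ (i : ℕ) → x i = 0}) :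
    padZ '' faceOf (fun i : Fin k => u (Fin.castLE h i)) (NDiag fun z : Fin k → ℂ => f (padZ z)) =
      faceOf u (NDiag f) := by
  have key : ∀ y : Fin k → ℝ, padZ y ∈ faceOf u (NDiag f) ↔
      y ∈ faceOf (fun i : Fin k => u (Fin.castLE h i))
        (NDiag fun z : Fin k → ℂ => f (padZ z)) := by
    intro y
    simp only [faceOf, Set.mem_ofPred_eq, padZ_mem_ndiag_iff h hf, sum_mul_padZ h, hell]
  ext x
  constructor
  · rintro ⟨y, hy, rfl⟩
    exact (key y).2 hy
  · intro hx
    have hp := padZ_restrict h (hsub hx)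
    exact ⟨_, (key _).1 (by rwa [hp]), hp⟩

/-- If the face of `f` in direction `u` lies in the coordinate subspace, then `u` has the same
minimum on both diagrams, since it is attained on that face. -/
lemma ell_eq_of_face_subset {k n : ℕ} (h : k ≤ n) {f : (Fin n → ℂ) → ℂ} (hf : AnalyticAt ℂ f 0)
    {u : Fin n → ℝ} (hu : ∀ i, 0 < u i) (hne : (NSupp f).Nonempty)
    (hsub : faceOf u (NDiag f) ⊆ {x | ∀ i : Fin n, k ≤ (i : ℕ) → x i = 0}) :
    ell u (NDiag f) =
      ell (fun i : Fin k => u (Fin.castLE h i)) (NDiag fun z : Fin k → ℂ => f (padZ z)) := by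
  obtain ⟨x, hx⟩ := face_nonempty hu hne
  have hp := padZ_restrict h (hsub hx)
  set y : Fin k → ℝ := fun i => x (Fin.castLE h i)
  have hy := (padZ_mem_ndiag_iff h hf y).1 (by rw [hp]; exact hx.1)
  refine le_antisymm (le_ell ⟨y, hy⟩ fun z hz => ?_) ?_
  · rw [← sum_mul_padZ h]
    exact ell_le hu ((padZ_mem_ndiag_iff h hf z).2 hz)
  · rw [← hx.2, ← hp, sum_mul_padZ h]
    exact ell_le (fun i => hu _) hy

/-- Extend a positive form `u'` by the weight `l + 1` in the new directions, where `l` is the minimum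
of `u'`. The new form exceeds `l` by at least the sum of the new coordinates on the whole Newton
diagram, so its minimum is `l`, attained only inside the coordinate subspace. -/
lemma exists_extension {k n : ℕ} (h : k ≤ n) {f : (Fin n → ℂ) → ℂ} (hf : AnalyticAt ℂ f 0)
    {u' : Fin k → ℝ} (hu' : ∀ i, 0 < u' i)
    (hne : (NSupp fun z : Fin k → ℂ => f (padZ z)).Nonempty) :
    ∃ u : Fin n → ℝ, (∀ i, 0 < u i) ∧ (fun i => u (Fin.castLE h i)) = u' ∧
      ell u (NDiag f) = ell u' (NDiag fun z : Fin k → ℂ => f (padZ z)) ∧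
      faceOf u (NDiag f) ⊆ {x | ∀ i : Fin n, k ≤ (i : ℕ) → x i = 0} := by
  obtain ⟨m, rfl⟩ := Nat.exists_eq_add_of_le h
  set g : (Fin k → ℂ) → ℂ := fun z => f (padZ z) with hg
  set l := ell u' (NDiag g) with hl
  have hneg : (NDiag g).Nonempty := hne.imp' _ fun _ => mem_ndiag_of_nsupp
  have hl0 : 0 ≤ l := le_ell hneg fun x hx =>
    Finset.sum_nonneg fun i _ => mul_nonneg (hu' i).le (ndiag_nonneg hx i)
  let u : Fin (k + m) → ℝ := Fin.append u' fun _ => l + 1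
  have hu1 : ∀ i : Fin k, u (Fin.castLE h i) = u' i := fun i => Fin.append_left _ _ i
  have hu2 : ∀ i : Fin m, u (Fin.natAdd k i) = l + 1 := fun i => Fin.append_right _ _ i
  have hu : ∀ i, 0 < u i := by
    intro i
    induction i using Fin.addCases with
    | left i => exact (hu1 i).symm ▸ hu' i
    | right i => rw [hu2]; linarith
  have hsum : ∀ x : Fin (k + m) → ℝ, ∑ i, u i * x i =
      ∑ i, u' i * x (Fin.castLE h i) + (l + 1) * ∑ i, x (Fin.natAdd k i) := by
    intro x
    rw [Fin.sum_univ_add, Finset.mul_sum]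
    congr 1
    · exact Finset.sum_congr rfl fun i _ => congrArg (· * _) (hu1 i)
    · exact Finset.sum_congr rfl fun i _ => congrArg (· * _) (hu2 i)
  -- `x ↦ ⟨u, x⟩ - ∑ x_{k+i}` is the linear form with the last weights lowered to `l`
  have hbound : ∀ x ∈ NDiag f,
      l ≤ ∑ i, u' i * x (Fin.castLE h i) + l * ∑ i, x (Fin.natAdd k i) := by
    let v : Fin (k + m) → ℝ := Fin.append u' fun _ => l
    have hv : ∀ x : Fin (k + m) → ℝ, ∑ i, v i * x i =
        ∑ i, u' i * x (Fin.castLE h i) + l * ∑ i, x (Fin.natAdd k i) := by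
      intro x
      rw [Fin.sum_univ_add, Finset.mul_sum]
      congr 1
      · exact Finset.sum_congr rfl fun i _ => congrArg (· * _) (Fin.append_left _ _ i)
      · exact Finset.sum_congr rfl fun i _ => congrArg (· * _) (Fin.append_right _ _ i)
    intro x hx
    rw [← hv]
    refine ndiag_subset (convex_le_dot v l) ?_ hx
    intro ν hν x hx
    change l ≤ _
    rw [hv]
    have hx0 : ∀ i, 0 ≤ x i := fun i => (Nat.cast_nonneg _).trans (hx i)
    have hs1 : 0 ≤ ∑ i, u' i * x (Fin.castLE h i) :=
      Finset.sum_nonneg fun i _ => mul_nonneg (hu' i).le (hx0 _)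
    have hs2 : 0 ≤ ∑ i, x (Fin.natAdd k i) := Finset.sum_nonneg fun i _ => hx0 _
    by_cases hν0 : ∀ i : Fin (k + m), k ≤ (i : ℕ) → ν i = 0
    · have hmem : (fun i : Fin k => x (Fin.castLE h i)) ∈ NDiag g := by
        refine subset_convexHull ℝ _ ⟨fun i => ν (Fin.castLE h i), ?_, fun i => hx _⟩
        rwa [hg, mem_nsupp_padZ h hf, padZ_restrict h hν0]
      have := ell_le hu' hmem
      have := mul_nonneg hl0 hs2
      linarith
    · push Not at hν0
      obtain ⟨i, hi, hνi⟩ := hν0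
      have h1 : (1 : ℝ) ≤ x i :=
        le_trans (by exact_mod_cast Nat.one_le_iff_ne_zero.2 hνi) (hx i)
      have h2 : x i ≤ ∑ i, x (Fin.natAdd k i) := by
        induction i using Fin.addCases with
        | left i => exact absurd i.2 (not_lt.2 hi)
        | right i =>
          exact Finset.single_le_sum (f := fun i => x (Fin.natAdd k i)) (fun j _ => hx0 _)
            (Finset.mem_univ i)
      nlinarith [mul_nonneg hl0 (sub_nonneg.2 (h1.trans h2))]
  have hlow : ∀ x ∈ NDiag f, l + ∑ i, x (Fin.natAdd k i) ≤ ∑ i, u i * x i := by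
    intro x hx
    rw [hsum]
    linarith [hbound x hx]
  have hpos : ∀ x ∈ NDiag f, 0 ≤ ∑ i, x (Fin.natAdd k i) := fun x hx =>
    Finset.sum_nonneg fun i _ => ndiag_nonneg hx _
  have hnef : (NDiag f).Nonempty := hneg.imp' padZ fun y => (padZ_mem_ndiag_iff h hf y).2
  have hell : ell u (NDiag f) = l := by
    refine le_antisymm (le_ell hneg fun y hy => ?_) (le_ell hnef fun x hx => ?_)
    · have := ell_le hu ((padZ_mem_ndiag_iff h hf y).2 hy)
      rw [sum_mul_padZ h] at this
      simpa only [hu1] using this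
    · linarith [hlow x hx, hpos x hx]
  refine ⟨u, hu, funext hu1, hell, ?_⟩
  rintro x ⟨hx, hxe⟩ i hi
  have h0 : ∑ i, x (Fin.natAdd k i) = 0 := by
    have := hlow x hx
    rw [hxe, hell] at this
    linarith [hpos x hx]
  induction i using Fin.addCases with
  | left i => exact absurd i.2 (not_lt.2 hi)
  | right i =>
    exact (Finset.sum_eq_zero_iff_of_nonneg fun i _ => ndiag_nonneg hx _).1 h0 i
      (Finset.mem_univ i)

/-- the Newton boundary of `g = f(·,…,·,0,…,0)` equals the set of compact
faces of `Γ(f)` contained in `{x_{k+1} = … = x_n = 0}` (under the embedding of `ℝ^k` into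
`ℝ^n` by extension with zeros). -/
theorem stmt8 {n k : ℕ} (hn : 2 ≤ n) (hk : k < n)
    (f : (Fin n → ℂ) → ℂ) (hf : AnalyticAt ℂ f 0)
    (g : (Fin k → ℂ) → ℂ)
    (hg : g = fun z => f (fun i => if h : (i : ℕ) < k then z ⟨i, h⟩ else 0))
    (hg0 : ¬∀ᶠ z in 𝓝 (0 : Fin k → ℂ), g z = 0) :
    {S : Set (Fin n → ℝ) | ∃ S' : Set (Fin k → ℝ), IsCompactFace g S' ∧
        S = (fun (y : Fin k → ℝ) (i : Fin n) =>
          if h : (i : ℕ) < k then y ⟨i, h⟩ else 0) '' S'} =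
      {S : Set (Fin n → ℝ) | IsCompactFace f S ∧
        S ⊆ {x | ∀ i : Fin n, k ≤ (i : ℕ) → x i = 0}} := by
  change g = fun z => f (padZ z) at hg
  subst hg
  have hne := nsupp_nonempty (analyticAt_comp_padZ hf) hg0
  ext S
  constructor
  · rintro ⟨S', ⟨u', hu', rfl⟩, rfl⟩
    obtain ⟨u, hu, rfl, hell, hsub⟩ := exists_extension hk.le hf hu' hne
    have himg := image_face_eq hk.le hf u hell hsub
    change IsCompactFace f (padZ '' _) ∧ padZ '' _ ⊆ _
    rw [himg]
    exact ⟨⟨u, hu, rfl⟩, hsub⟩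
  · rintro ⟨⟨u, hu, rfl⟩, hsub⟩
    have hnef : (NSupp f).Nonempty := hne.imp' padZ fun ν => (mem_nsupp_padZ hk.le hf ν).1
    have hell := ell_eq_of_face_subset hk.le hf hu hnef hsub
    exact ⟨_, ⟨fun i => u (Fin.castLE hk.le i), fun i => hu _, rfl⟩,
      (image_face_eq hk.le hf u hell hsub).symm⟩
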